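/- Let T > 0, 0 < L₀ < L, and μ₁, μ₂ > 0. Let η ∈ C¹([0,L]) with η(0) = η(L) = 0 and η(L₀) ≤ 0. Let φ : [0,L₀]×[0,T] → ℝ and u : [L₀,L]×[0,T] → ℝ be C³ functions with φ_x(L₀,t) = u_x(L₀,t) for all t ∈ [0,T]. Then μ₁∫₀^T∫₀^{L₀} φ_ttx (η φ_xx + η′ φ_x) dx dt + μ₂∫₀^T∫_{L₀}^{L} u_ttx (η u_xx + η′ u_x) dx dt = −(μ₁/2)∫₀^T∫₀^{L₀} φ_tx² η′ dx dt − (μ₂/2)∫₀^T∫_{L₀}^{L} u_tx² η′ dx dt + (μ₁ − μ₂)(−η(L₀))/2 ∫₀^T u_tx(L₀,t)² dt + [μ₁∫₀^{L₀} φ_tx (η′ φ_x + η φ_xx) dx + μ₂∫_{L₀}^{L} u_tx (η′ u_x + η u_xx) dx] evaluated at t = T minus the same expression evaluated at t = 0. -/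

import Mathlib

open MeasureTheory

/-- Partial derivative in the first (space) variable. -/
noncomputable def pdx (f : ℝ → ℝ → ℝ) : ℝ → ℝ → ℝ := fun x t => deriv (fun y => f y t) x

/-- Partial derivative in the second (time) variable. -/
noncomputable def pdt (f : ℝ → ℝ → ℝ) : ℝ → ℝ → ℝ := fun x t => deriv (fun s => f x s) t

/-! Put `g = φ_x` on `[0, L₀]` and `g = u_x` on `[L₀, L]`, and let `m = (η g)_x`. Since
`m_t = (η g_t)_x`, the product rule gives the divergence form
`g_tt m = (g_t m)_t - η' g_t ^ 2 / 2 - (η g_t ^ 2 / 2)_x`.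
Integrating over each rectangle, the boundary terms at the ends `0` and `L` vanish with `η`, while
those at the interface `L₀` combine because `φ_tx = u_tx` there. -/

section PartialDerivatives

open Function

variable {f : ℝ → ℝ → ℝ}

lemma hasDerivAt_pdx (hf : Differentiable ℝ (uncurry f)) (x t : ℝ) :
    HasDerivAt (fun y => f y t) (pdx f x t) x :=
  have h : Differentiable ℝ fun y => uncurry f (y, t) := by fun_prop
  (h x).hasDerivAt

lemma hasDerivAt_pdt (hf : Differentiable ℝ (uncurry f)) (x t : ℝ) :
    HasDerivAt (fun s => f x s) (pdt f x t) t :=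
  have h : Differentiable ℝ fun s => uncurry f (x, s) := by fun_prop
  (h t).hasDerivAt

lemma uncurry_pdx_eq_fderiv (hf : Differentiable ℝ (uncurry f)) :
    uncurry (pdx f) = fun p => fderiv ℝ (uncurry f) p (1, 0) := by
  ext ⟨x, t⟩
  exact ((hf (x, t)).hasFDerivAt.comp_hasDerivAt x
    ((hasDerivAt_id x).prodMk (hasDerivAt_const x t))).deriv

lemma uncurry_pdt_eq_fderiv (hf : Differentiable ℝ (uncurry f)) :
    uncurry (pdt f) = fun p => fderiv ℝ (uncurry f) p (0, 1) := by
  ext ⟨x, t⟩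
  exact ((hf (x, t)).hasFDerivAt.comp_hasDerivAt t
    ((hasDerivAt_const t x).prodMk (hasDerivAt_id t))).deriv

variable {m n : WithTop ℕ∞}

lemma contDiff_pdx (hf : ContDiff ℝ n (uncurry f)) (hmn : m + 1 ≤ n) :
    ContDiff ℝ m (uncurry (pdx f)) := by
  have hn : n ≠ 0 := by rintro rfl; simp at hmn
  rw [uncurry_pdx_eq_fderiv (hf.differentiable hn)]
  exact (hf.fderiv_right hmn).clm_apply contDiff_const

lemma contDiff_pdt (hf : ContDiff ℝ n (uncurry f)) (hmn : m + 1 ≤ n) :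
    ContDiff ℝ m (uncurry (pdt f)) := by
  have hn : n ≠ 0 := by rintro rfl; simp at hmn
  rw [uncurry_pdt_eq_fderiv (hf.differentiable hn)]
  exact (hf.fderiv_right hmn).clm_apply contDiff_const

lemma pdx_pdt_comm (hf : ContDiff ℝ 2 (uncurry f)) : pdx (pdt f) = pdt (pdx f) := by
  have hdf : Differentiable ℝ (uncurry f) := hf.differentiable two_ne_zero
  have hdx : Differentiable ℝ (uncurry (pdx f)) :=
    (contDiff_pdx (m := 1) hf (by norm_num)).differentiable one_ne_zero
  have hdt : Differentiable ℝ (uncurry (pdt f)) :=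
    (contDiff_pdt (m := 1) hf (by norm_num)).differentiable one_ne_zero
  have hd2f : Differentiable ℝ (fderiv ℝ (uncurry f)) :=
    (hf.fderiv_right (m := 1) (by norm_num)).differentiable one_ne_zero
  have fderiv_fderiv_apply (p v w : ℝ × ℝ) : fderiv ℝ (fun q => fderiv ℝ (uncurry f) q v) p w
      = fderiv ℝ (fderiv ℝ (uncurry f)) p w v := by
    simp [fderiv_clm_apply (hd2f p) (differentiableAt_const v)]
  refine uncurry_injective (funext fun p => ?_)
  rw [uncurry_pdx_eq_fderiv hdt, uncurry_pdt_eq_fderiv hdx, uncurry_pdx_eq_fderiv hdf,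
    uncurry_pdt_eq_fderiv hdf]
  simp only [fderiv_fderiv_apply]
  exact (hf.contDiffAt.isSymmSndFDerivAt (by simp)).eq _ _

lemma pdx_pdt_pdt_comm (hf : ContDiff ℝ 3 (uncurry f)) :
    pdx (pdt (pdt f)) = pdt (pdt (pdx f)) := by
  rw [pdx_pdt_comm (contDiff_pdt hf (by norm_num)), pdx_pdt_comm (hf.of_le (by norm_num))]

end PartialDerivatives

section IteratedIntegrals

open Function

variable {E : Type*} [NormedAddCommGroup E] [NormedSpace ℝ E] {f g : ℝ → ℝ → E}

lemma continuous_intervalIntegral_fst (hf : Continuous (uncurry f)) (a b : ℝ) :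
    Continuous fun t => ∫ x in a..b, f x t :=
  intervalIntegral.continuous_parametric_intervalIntegral_of_continuous'
    (f := fun t x => f x t) (hf.comp continuous_swap) a b

lemma integral_integral_add_of_continuous (hf : Continuous (uncurry f))
    (hg : Continuous (uncurry g)) (a b t₀ t₁ : ℝ) :
    ∫ t in t₀..t₁, ∫ x in a..b, (f x t + g x t)
      = (∫ t in t₀..t₁, ∫ x in a..b, f x t) + ∫ t in t₀..t₁, ∫ x in a..b, g x t := by
  rw [← intervalIntegral.integral_add
    ((continuous_intervalIntegral_fst hf a b).intervalIntegrable _ _)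
    ((continuous_intervalIntegral_fst hg a b).intervalIntegrable _ _)]
  congr 1 with t
  exact intervalIntegral.integral_add ((hf.uncurry_right t).intervalIntegrable _ _)
    ((hg.uncurry_right t).intervalIntegrable _ _)

lemma integral_integral_swap_of_continuous (hf : Continuous (uncurry f)) (a b t₀ t₁ : ℝ) :
    ∫ t in t₀..t₁, ∫ x in a..b, f x t = ∫ x in a..b, ∫ t in t₀..t₁, f x t :=
  (intervalIntegral_intervalIntegral_swap
    ((hf.continuousOn.integrableOn_compact (isCompact_uIcc.prod isCompact_uIcc)).mono_set
      (Set.prod_mono Set.uIoc_subset_uIcc Set.uIoc_subset_uIcc))).symm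

lemma integral_integral_eq_sub_of_hasDerivAt [CompleteSpace E] {f' : ℝ → ℝ → E}
    (hderiv : ∀ x t, HasDerivAt (f x) (f' x t) t) (hf : ∀ t, Continuous fun x => f x t)
    (hf' : Continuous (uncurry f')) (a b t₀ t₁ : ℝ) :
    ∫ t in t₀..t₁, ∫ x in a..b, f' x t = (∫ x in a..b, f x t₁) - ∫ x in a..b, f x t₀ := by
  have integral_time (x : ℝ) : ∫ t in t₀..t₁, f' x t = f x t₁ - f x t₀ :=
    intervalIntegral.integral_eq_sub_of_hasDerivAt (fun t _ => hderiv x t)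
      ((hf'.uncurry_left x).intervalIntegrable _ _)
  simp_rw [integral_integral_swap_of_continuous hf', integral_time]
  exact intervalIntegral.integral_sub ((hf t₁).intervalIntegrable _ _)
    ((hf t₀).intervalIntegrable _ _)

end IteratedIntegrals

lemma integral_mul_add_deriv_mul {a b : ℝ} {η η' w w' : ℝ → ℝ}
    (hη : ∀ x ∈ Set.uIcc a b, HasDerivAt η (η' x) x)
    (hw : ∀ x ∈ Set.uIcc a b, HasDerivAt w (w' x) x)
    (hη' : ContinuousOn η' (Set.uIcc a b)) (hw' : ContinuousOn w' (Set.uIcc a b)) :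
    ∫ x in a..b, w x * (η x * w' x + η' x * w x)
      = ((∫ x in a..b, w x ^ 2 * η' x) + (η b * w b ^ 2 - η a * w a ^ 2)) / 2 := by
  have hηc : ContinuousOn η (Set.uIcc a b) := HasDerivAt.continuousOn hη
  have hwc : ContinuousOn w (Set.uIcc a b) := HasDerivAt.continuousOn hw
  have hderiv : ∀ x ∈ Set.uIcc a b, HasDerivAt (fun y => η y * w y ^ 2)
      (2 * (w x * (η x * w' x + η' x * w x)) - w x ^ 2 * η' x) x := fun x hx =>
    ((hη x hx).fun_mul ((hw x hx).fun_pow 2)).congr_deriv (by ring)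
  have hboundary := intervalIntegral.integral_eq_sub_of_hasDerivAt hderiv
    (ContinuousOn.intervalIntegrable (by fun_prop))
  rw [intervalIntegral.integral_sub (ContinuousOn.intervalIntegrable (by fun_prop))
    (ContinuousOn.intervalIntegrable (by fun_prop)),
    intervalIntegral.integral_const_mul] at hboundary
  linarith

section Multiplier

open Function

/-- The multiplier `(η g)_x`, written out by the product rule so that `g` and its `x`-derivative
appear separately, as in the multiplier identity. -/
noncomputable def multiplier (η : ℝ → ℝ) (g : ℝ → ℝ → ℝ) : ℝ → ℝ → ℝ :=
  fun x t => η x * pdx g x t + deriv η x * g x t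

variable {η : ℝ → ℝ} {g : ℝ → ℝ → ℝ}

lemma continuous_multiplier (hη : ContDiff ℝ 1 η) (hg : ContDiff ℝ 1 (uncurry g)) :
    Continuous (uncurry (multiplier η g)) :=
  ((hη.continuous.comp continuous_fst).mul (contDiff_pdx (m := 0) hg (by norm_num)).continuous).add
    (((hη.continuous_deriv le_rfl).comp continuous_fst).mul hg.continuous)

lemma hasDerivAt_multiplier (η : ℝ → ℝ) (hg : ContDiff ℝ 2 (uncurry g)) (x t : ℝ) :
    HasDerivAt (multiplier η g x) (multiplier η (pdt g) x t) t := by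
  have hgx : ContDiff ℝ 1 (uncurry (pdx g)) := contDiff_pdx hg (by norm_num)
  unfold multiplier
  rw [pdx_pdt_comm hg]
  exact ((hasDerivAt_pdt (hgx.differentiable one_ne_zero) x t).const_mul (η x)).add
    ((hasDerivAt_pdt (hg.differentiable two_ne_zero) x t).const_mul (deriv η x))

lemma integral_mul_multiplier (hη : ContDiff ℝ 1 η) (hg : ContDiff ℝ 1 (uncurry g)) (a b t : ℝ) :
    ∫ x in a..b, g x t * multiplier η g x t
      = ((∫ x in a..b, g x t ^ 2 * deriv η x) + (η b * g b t ^ 2 - η a * g a t ^ 2)) / 2 :=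
  integral_mul_add_deriv_mul (fun x _ => (hη.differentiable one_ne_zero x).hasDerivAt)
    (fun x _ => hasDerivAt_pdx (hg.differentiable one_ne_zero) x t)
    (hη.continuous_deriv le_rfl).continuousOn
    ((contDiff_pdx (m := 0) hg (by norm_num)).continuous.uncurry_right t).continuousOn

lemma integral_integral_mul_multiplier (hη : ContDiff ℝ 1 η) (hg : ContDiff ℝ 1 (uncurry g))
    (a b t₀ t₁ : ℝ) :
    ∫ t in t₀..t₁, ∫ x in a..b, g x t * multiplier η g x t
      = ((∫ t in t₀..t₁, ∫ x in a..b, g x t ^ 2 * deriv η x)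
        + (η b * (∫ t in t₀..t₁, g b t ^ 2) - η a * ∫ t in t₀..t₁, g a t ^ 2)) / 2 := by
  have hbulk : Continuous fun t => ∫ x in a..b, g x t ^ 2 * deriv η x :=
    continuous_intervalIntegral_fst (f := fun x t => g x t ^ 2 * deriv η x)
      ((hg.continuous.fun_pow 2).fun_mul ((hη.continuous_deriv le_rfl).comp continuous_fst)) a b
  have hboundary (x : ℝ) : Continuous fun t => η x * g x t ^ 2 :=
    continuous_const.mul ((hg.continuous.uncurry_left x).pow 2)
  simp_rw [integral_mul_multiplier hη hg, intervalIntegral.integral_div]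
  rw [intervalIntegral.integral_add (hbulk.intervalIntegrable _ _)
      (((hboundary b).fun_sub (hboundary a)).intervalIntegrable _ _),
    intervalIntegral.integral_sub ((hboundary b).intervalIntegrable _ _)
      ((hboundary a).intervalIntegrable _ _),
    intervalIntegral.integral_const_mul, intervalIntegral.integral_const_mul]

theorem integral_integral_pdt_pdt_mul_multiplier (hη : ContDiff ℝ 1 η)
    (hg : ContDiff ℝ 2 (uncurry g)) (a b t₀ t₁ : ℝ) :
    ∫ t in t₀..t₁, ∫ x in a..b, pdt (pdt g) x t * multiplier η g x t
      = (∫ x in a..b, pdt g x t₁ * multiplier η g x t₁)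
        - (∫ x in a..b, pdt g x t₀ * multiplier η g x t₀)
        - ((∫ t in t₀..t₁, ∫ x in a..b, pdt g x t ^ 2 * deriv η x)
          + (η b * (∫ t in t₀..t₁, pdt g b t ^ 2) - η a * ∫ t in t₀..t₁, pdt g a t ^ 2)) / 2 := by
  have hgt : ContDiff ℝ 1 (uncurry (pdt g)) := contDiff_pdt hg (by norm_num)
  have hgtt : Continuous (uncurry (pdt (pdt g))) :=
    (contDiff_pdt (m := 0) hgt (by norm_num)).continuous
  have hm : Continuous (uncurry (multiplier η g)) :=
    continuous_multiplier hη (hg.of_le (by norm_num))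
  have hinertia : Continuous (uncurry fun x t => pdt (pdt g) x t * multiplier η g x t) :=
    hgtt.mul hm
  have henergy : Continuous (uncurry fun x t => pdt g x t * multiplier η (pdt g) x t) :=
    hgt.continuous.mul (continuous_multiplier hη hgt)
  have htotal := integral_integral_eq_sub_of_hasDerivAt
    (fun x t => (hasDerivAt_pdt (hgt.differentiable one_ne_zero) x t).fun_mul
      (hasDerivAt_multiplier η hg x t))
    (fun t => (hgt.continuous.uncurry_right t).mul (hm.uncurry_right t))
    (hinertia.add henergy) a b t₀ t₁
  rw [integral_integral_add_of_continuous hinertia henergy,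
    integral_integral_mul_multiplier hη hgt] at htotal
  exact eq_sub_of_add_eq htotal

end Multiplier

lemma integral_comp_deriv_congr {E G : Type*} [NormedAddCommGroup E] [NormedSpace ℝ E]
    [NormedAddCommGroup G] [NormedSpace ℝ G] {v w : ℝ → E} {a b : ℝ}
    (hvw : Set.EqOn v w (Set.uIoo a b)) (Φ : E → G) :
    ∫ t in a..b, Φ (deriv v t) = ∫ t in a..b, Φ (deriv w t) :=
  intervalIntegral.integral_congr_uIoo fun _ ht => congrArg Φ (hvw.deriv isOpen_Ioo ht)

theorem stmt_7_general (T L₀ L μ₁ μ₂ : ℝ)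
    (η : ℝ → ℝ) (hη : ContDiff ℝ 1 η) (hη0 : η 0 = 0) (hηL : η L = 0)
    (φ u : ℝ → ℝ → ℝ)
    (hφ : ContDiff ℝ 3 (Function.uncurry φ))
    (hu : ContDiff ℝ 3 (Function.uncurry u))
    (htr : ∀ t ∈ Set.uIoo 0 T, pdx φ L₀ t = pdx u L₀ t)
    (F : ℝ → ℝ)
    (hF : ∀ t : ℝ, F t =
      μ₁ * (∫ x in 0..L₀,
        pdx (pdt φ) x t * (deriv η x * pdx φ x t + η x * pdx (pdx φ) x t))
      + μ₂ * (∫ x in L₀..L,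
        pdx (pdt u) x t * (deriv η x * pdx u x t + η x * pdx (pdx u) x t))) :
    μ₁ * (∫ t in 0..T, (∫ x in 0..L₀,
        pdx (pdt (pdt φ)) x t * (η x * pdx (pdx φ) x t + deriv η x * pdx φ x t)))
      + μ₂ * (∫ t in 0..T, (∫ x in L₀..L,
        pdx (pdt (pdt u)) x t * (η x * pdx (pdx u) x t + deriv η x * pdx u x t)))
    = -(μ₁ / 2) * (∫ t in 0..T, (∫ x in 0..L₀, (pdx (pdt φ) x t) ^ 2 * deriv η x))
      - (μ₂ / 2) * (∫ t in 0..T, (∫ x in L₀..L, (pdx (pdt u) x t) ^ 2 * deriv η x))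
      + (μ₁ - μ₂) * (-η L₀) / 2 * (∫ t in 0..T, (pdx (pdt u) L₀ t) ^ 2)
      + (F T - F 0) := by
  have hleft := integral_integral_pdt_pdt_mul_multiplier hη
    (contDiff_pdx hφ (by norm_num)) 0 L₀ 0 T
  have hright := integral_integral_pdt_pdt_mul_multiplier hη
    (contDiff_pdx hu (by norm_num)) L₀ L 0 T
  have hinterface : ∫ t in 0..T, pdt (pdx φ) L₀ t ^ 2 = ∫ t in 0..T, pdt (pdx u) L₀ t ^ 2 :=
    integral_comp_deriv_congr htr (· ^ 2)
  simp only [multiplier] at hleft hright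
  simp only [hF, add_comm (deriv η _ * _)]
  rw [pdx_pdt_pdt_comm hφ, pdx_pdt_pdt_comm hu, pdx_pdt_comm (hφ.of_le (by norm_num)),
    pdx_pdt_comm (hu.of_le (by norm_num)), hleft, hright, hinterface, hη0, hηL]
  ring

/-- Multiplier identity for the rotational-inertia terms in the proof of asymptotic
smoothness of the transmission beam system. -/
theorem stmt_7 (T L₀ L μ₁ μ₂ : ℝ)
    (hT : 0 < T) (hL₀ : 0 < L₀) (hL : L₀ < L)
    (hμ₁ : 0 < μ₁) (hμ₂ : 0 < μ₂)
    (η : ℝ → ℝ) (hη : ContDiff ℝ 1 η)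
    (hη0 : η 0 = 0) (hηL : η L = 0) (hηL₀ : η L₀ ≤ 0)
    (φ u : ℝ → ℝ → ℝ)
    (hφ : ContDiff ℝ 3 (Function.uncurry φ))
    (hu : ContDiff ℝ 3 (Function.uncurry u))
    (htr : ∀ t ∈ Set.Icc (0:ℝ) T, pdx φ L₀ t = pdx u L₀ t)
    (F : ℝ → ℝ)
    (hF : ∀ t : ℝ, F t =
      μ₁ * (∫ x in (0:ℝ)..L₀,
        pdx (pdt φ) x t * (deriv η x * pdx φ x t + η x * pdx (pdx φ) x t))
      + μ₂ * (∫ x in L₀..L,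
        pdx (pdt u) x t * (deriv η x * pdx u x t + η x * pdx (pdx u) x t))) :
    μ₁ * (∫ t in (0:ℝ)..T, (∫ x in (0:ℝ)..L₀,
        pdx (pdt (pdt φ)) x t * (η x * pdx (pdx φ) x t + deriv η x * pdx φ x t)))
      + μ₂ * (∫ t in (0:ℝ)..T, (∫ x in L₀..L,
        pdx (pdt (pdt u)) x t * (η x * pdx (pdx u) x t + deriv η x * pdx u x t)))
    = -(μ₁ / 2) * (∫ t in (0:ℝ)..T, (∫ x in (0:ℝ)..L₀, (pdx (pdt φ) x t) ^ 2 * deriv η x))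
      - (μ₂ / 2) * (∫ t in (0:ℝ)..T, (∫ x in L₀..L, (pdx (pdt u) x t) ^ 2 * deriv η x))
      + (μ₁ - μ₂) * (-η L₀) / 2 * (∫ t in (0:ℝ)..T, (pdx (pdt u) L₀ t) ^ 2)
      + (F T - F 0) := by
  exact stmt_7_general T L₀ L μ₁ μ₂ η hη hη0 hηL φ u hφ hu
    (fun t ht => htr t (Set.uIcc_of_le hT.le ▸ Set.uIoo_subset_uIcc_self ht)) F hF
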